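/- If Z is an A–Y cut in H^1, then Z satisfies the graphical adjustment criterion for A,Y,L,N in G (that is, A and Y are d-separated by Z in G^pbd(A,Y), Z ∩ forb(A,Y,G) = ∅, and L ⊆ Z ⊆ N). -/

import Mathlib

open Relation Set

namespace CausalGraph

variable {V : Type*} [Fintype V] [DecidableEq V]

/-- `p` is a path in the undirected sense from `u` to `v` along adjacency `Adj`:
a nonempty list of pairwise distinct vertices, consecutive ones adjacent,
starting at `u` and ending at `v`. -/
def IsPath (Adj : V → V → Prop) (u v : V) (p : List V) : Prop :=
  List.Chain' Adj p ∧ p.head? = some u ∧ p.getLast? = some v ∧ p.Nodup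

/-- Ancestors of `S` in the digraph `D` (every vertex is an ancestor of itself). -/
def anc (D : V → V → Prop) (S : Set V) : Set V :=
  {u | ∃ v ∈ S, Relation.ReflTransGen D u v}

/-- Descendants of `S` in the digraph `D` (every vertex is a descendant of itself). -/
def desc (D : V → V → Prop) (S : Set V) : Set V :=
  {u | ∃ v ∈ S, Relation.ReflTransGen D v u}

/-- Parents of vertices of `S` in the digraph `D`. -/
def parents (D : V → V → Prop) (S : Set V) : Set V :=
  {u | ∃ v ∈ S, D u v}

/-- The digraph `D` is acyclic. -/
def Acyclic (D : V → V → Prop) : Prop :=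
  ∀ u v, D u v → ¬ Relation.ReflTransGen D v u

/-- Vertices other than `A` lying on a directed path from `A` to `Y`. -/
def cn (D : V → V → Prop) (A Y : V) : Set V :=
  {v | v ≠ A ∧ Relation.ReflTransGen D A v ∧ Relation.ReflTransGen D v Y}

/-- The forbidden set. -/
def forb (D : V → V → Prop) (A Y : V) : Set V :=
  desc D (cn D A Y) ∪ {A}

/-- Proper back-door graph: delete every edge from `A` into `cn D A Y`. -/
def pbd (D : V → V → Prop) (A Y : V) : V → V → Prop :=
  fun u v => D u v ∧ ¬(u = A ∧ v ∈ cn D A Y)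

/-- `y` is an interior vertex of the list `p` with neighbours `x` and `z` on the path. -/
def InteriorAt (p : List V) (x y z : V) : Prop :=
  ∃ s t : List V, p = s ++ x :: y :: z :: t

/-- The path `p` is blocked by `Z` in the digraph `D`: some interior non-collider
lies in `Z`, or some interior collider has no descendant in `Z`. -/
def Blocked (D : V → V → Prop) (Z : Set V) (p : List V) : Prop :=
  (∃ x y z, InteriorAt p x y z ∧ ¬(D x y ∧ D z y) ∧ y ∈ Z) ∨
  (∃ x y z, InteriorAt p x y z ∧ (D x y ∧ D z y) ∧ ∀ d ∈ desc D {y}, d ∉ Z)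

/-- d-separation of `S` and `T` given `Z` in the digraph `D`. -/
def DSep (D : V → V → Prop) (S T Z : Set V) : Prop :=
  ∀ s ∈ S, ∀ t ∈ T, ∀ p : List V,
    IsPath (fun a b => D a b ∨ D b a) s t p → Blocked D Z p

/-- Moral graph of the subgraph of the digraph `D` induced on `Vs`. -/
def moral (D : V → V → Prop) (Vs : Set V) : SimpleGraph V :=
  SimpleGraph.fromRel (fun u v =>
    u ∈ Vs ∧ v ∈ Vs ∧ (D u v ∨ D v u ∨ ∃ w ∈ Vs, D u w ∧ D v w))

/-- Separation in an undirected graph: every path from `S` to `T` meets `W`. -/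
def USep (H : SimpleGraph V) (S T W : Set V) : Prop :=
  ∀ s ∈ S, ∀ t ∈ T, ∀ p : List V, IsPath H.Adj s t p → ∃ z ∈ W, z ∈ p

/-- `Z` is an `A`–`Y` cut in an undirected graph `H` with vertex set `Vs`. -/
def IsCut (Vs : Set V) (H : SimpleGraph V) (A Y : V) (Z : Set V) : Prop :=
  Z ⊆ Vs ∧ Z ∩ {A, Y} = ∅ ∧ ∀ p : List V, IsPath H.Adj A Y p → ∃ z ∈ Z, z ∈ p

def MinimalCut (Vs : Set V) (H : SimpleGraph V) (A Y : V) (Z : Set V) : Prop :=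
  IsCut Vs H A Y Z ∧ ∀ Z' ⊂ Z, ¬ IsCut Vs H A Y Z'

def MinimumCut (Vs : Set V) (H : SimpleGraph V) (A Y : V) (Z : Set V) : Prop :=
  IsCut Vs H A Y Z ∧ ∀ Z', IsCut Vs H A Y Z' → Z.ncard ≤ Z'.ncard

/-- Connected component of `y` in `H` restricted to the complement of `U`:
vertices reachable from `y` by paths avoiding `U`. -/
def cc (H : SimpleGraph V) (U : Set V) (y : V) : Set V :=
  {w | ∃ p : List V, IsPath H.Adj y w p ∧ ∀ x ∈ p, x ∉ U}

/-- Boundary of `S` in `H`: vertices outside `S` adjacent to some vertex of `S`. -/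
def bdry (H : SimpleGraph V) (S : Set V) : Set V :=
  {v | v ∉ S ∧ ∃ u ∈ S, H.Adj v u}

/-- The partial order `Z₁ ⊴_H Z₂` between `A`–`Y` cuts. -/
def TLE (H : SimpleGraph V) (A Y : V) (Z₁ Z₂ : Set V) : Prop :=
  USep H {Y} (Z₂ \ Z₁) Z₁ ∧ USep H {A} (Z₁ \ Z₂) Z₂

/-- Ancestors of `{A, Y} ∪ L`. -/
def ancAYL (D : V → V → Prop) (A Y : V) (L : Set V) : Set V :=
  anc D ({A, Y} ∪ L)

/-- The moral graph `H⁰` of the proper back-door graph induced on `an_G({A,Y} ∪ L)`. -/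
def H0 (D : V → V → Prop) (A Y : V) (L : Set V) : SimpleGraph V :=
  moral (pbd D A Y) (ancAYL D A Y L)

/-- The set of vertices removed from `H⁰` when constructing `H¹`. -/
def Ignore (D : V → V → Prop) (A Y : V) (L N : Set V) : Set V :=
  (ancAYL D A Y L \ {A, Y}) ∩ ((Set.univ \ N) ∪ forb D A Y)

/-- Vertex set of `H¹`. -/
def H1verts (D : V → V → Prop) (A Y : V) (L N : Set V) : Set V :=
  ancAYL D A Y L \ Ignore D A Y L N

/-- The non-parametric adjustment efficiency graph `H¹`: delete the vertices of
`Ignore`, join two remaining vertices if they are joined in `H⁰` by a path all of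
whose intermediate vertices are in `Ignore`, and join `A` and `Y` to every vertex
of `L`. -/
def H1 (D : V → V → Prop) (A Y : V) (L N : Set V) : SimpleGraph V :=
  SimpleGraph.fromRel (fun u v =>
    u ∈ H1verts D A Y L N ∧ v ∈ H1verts D A Y L N ∧
      ((∃ p : List V, IsPath (H0 D A Y L).Adj u v p ∧
          ∀ x ∈ p, x ≠ u → x ≠ v → x ∈ Ignore D A Y L N) ∨
        (u = A ∧ v ∈ L) ∨ (u = Y ∧ v ∈ L)))

/-- The graphical adjustment criterion for `A, Y, L, N` in the DAG `D`. -/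
def GAC (D : V → V → Prop) (A Y : V) (L N Z : Set V) : Prop :=
  DSep (pbd D A Y) {A} {Y} Z ∧ Z ∩ forb D A Y = ∅ ∧ L ⊆ Z ∧ Z ⊆ N

def MinimalGAC (D : V → V → Prop) (A Y : V) (L N Z : Set V) : Prop :=
  GAC D A Y L N Z ∧ ∀ Z' ⊂ Z, ¬ GAC D A Y L N Z'

def MinimumGAC (D : V → V → Prop) (A Y : V) (L N Z : Set V) : Prop :=
  GAC D A Y L N Z ∧ ∀ Z', GAC D A Y L N Z' → Z.ncard ≤ Z'.ncard

/-- Graphical admissibility of the pair `(L, N)`. -/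
def Admissible (D : V → V → Prop) (A Y : V) (L N : Set V) : Prop :=
  ∃ Z, GAC D A Y L N Z

end CausalGraph

/-!
Let `p` be an `A`–`Y` path of the proper back-door graph that `Z` leaves open. Its colliders have
descendants in `Z`, and following the edges of `p` forwards from any other vertex leads to a
collider or to an endpoint, so all of `p` lies in `an_G({A, Y} ∪ L)`. No two colliders are
neighbours on `p`, so jumping over each collider by the moral edge between its neighbours leaves
only non-colliders, which are not in `Z`: thus `A` and `Y` are connected outside `Z` in `H⁰`.
Contracting the runs of `Ignore`-vertices yields a connection outside `Z` in `H¹`, so `Z` is not a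
cut. A vertex `l ∈ L \ Z` would give the connection `A – l – Y`.
-/

namespace CausalGraph

section Paths

variable {V : Type*} {R S : V → V → Prop} {u v x : V} {p : List V}

theorem isPath_iff :
    IsPath R u v p ↔ p.IsChain R ∧ p.head? = some u ∧ p.getLast? = some v ∧ p.Nodup :=
  Iff.rfl

theorem isPath_singleton {a : V} : IsPath R u v [a] ↔ a = u ∧ a = v := by
  simp [isPath_iff]

theorem isPath_cons_cons {a b : V} {t : List V} :
    IsPath R u v (a :: b :: t) ↔ a = u ∧ R a b ∧ a ∉ b :: t ∧ IsPath R b v (b :: t) := by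
  simp only [isPath_iff, List.isChain_cons_cons, List.head?_cons, Option.some.injEq,
    List.getLast?_cons_cons, List.nodup_cons (a := a)]
  tauto

theorem IsPath.exists_eq_cons (h : IsPath R u v p) : ∃ t, p = u :: t := by
  obtain ⟨-, hhead, -, -⟩ := h
  exact List.head?_eq_some_iff.1 hhead

theorem IsPath.head_eq {a : V} {t : List V} (h : IsPath R u v (a :: t)) : a = u :=
  Option.some.inj h.2.1

theorem IsPath.mono (hRS : ∀ a b, R a b → S a b) (h : IsPath R u v p) : IsPath S u v p :=
  ⟨List.IsChain.imp hRS h.1, h.2⟩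

theorem IsPath.eq_or_exists_rel_of_mem (h : IsPath R u v p) (hx : x ∈ p) :
    x = u ∨ ∃ w, R w x := by
  induction p generalizing u with
  | nil => simp at hx
  | cons a t ih =>
    obtain rfl : a = u := h.head_eq
    rcases List.mem_cons.1 hx with rfl | hxt
    · exact .inl rfl
    · cases t with
      | nil => simp at hxt
      | cons b t =>
        obtain ⟨-, hab, -, hbt⟩ := isPath_cons_cons.1 h
        rcases ih hbt hxt with rfl | hw
        · exact .inr ⟨a, hab⟩
        · exact .inr hw

theorem IsPath.exists_isPath_of_mem (h : IsPath R u v p) (hx : x ∈ p) : ∃ q, IsPath R x v q := by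
  obtain ⟨s, t, rfl⟩ := List.append_of_mem hx
  obtain ⟨hchain, -, hlast, hnodup⟩ := h
  exact ⟨x :: t, (List.isChain_append.1 hchain).2.1, rfl, by simpa using hlast,
    (List.nodup_append.1 hnodup).2.1⟩

theorem exists_isPath_of_reflTransGen (h : ReflTransGen R u v) : ∃ p, IsPath R u v p := by
  induction h using ReflTransGen.head_induction_on with
  | refl => exact ⟨[v], isPath_singleton.2 ⟨rfl, rfl⟩⟩
  | @head a b hab _ ih =>
    obtain ⟨p, hp⟩ := ih
    by_cases ha : a ∈ p
    · exact hp.exists_isPath_of_mem ha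
    · obtain ⟨t, rfl⟩ := hp.exists_eq_cons
      exact ⟨a :: b :: t, isPath_cons_cons.2 ⟨rfl, hab, ha, hp⟩⟩

end Paths

section OpenPaths

variable {V : Type*} {D : V → V → Prop} {S Z : Set V} {u v x y z : V} {p : List V}

theorem InteriorAt.cons (h : InteriorAt p x y z) (a : V) : InteriorAt (a :: p) x y z := by
  obtain ⟨s, t, rfl⟩ := h
  exact ⟨a :: s, t, rfl⟩

theorem interiorAt_cons_cons_cons (t : List V) : InteriorAt (x :: y :: z :: t) x y z :=
  ⟨[], t, rfl⟩

theorem Blocked.cons (h : Blocked D Z p) (a : V) : Blocked D Z (a :: p) := by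
  rcases h with ⟨x, y, z, hi, h⟩ | ⟨x, y, z, hi, h⟩
  · exact .inl ⟨x, y, z, hi.cons a, h⟩
  · exact .inr ⟨x, y, z, hi.cons a, h⟩

theorem InteriorAt.notMem_of_not_blocked (hi : InteriorAt p x y z) (hp : ¬ Blocked D Z p)
    (hncol : ¬ (D x y ∧ D z y)) : y ∉ Z :=
  fun hy => hp (.inl ⟨x, y, z, hi, hncol, hy⟩)

theorem InteriorAt.exists_mem_desc_of_not_blocked (hi : InteriorAt p x y z)
    (hp : ¬ Blocked D Z p) (hcol : D x y ∧ D z y) : ∃ d ∈ desc D {y}, d ∈ Z := by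
  by_contra! hd
  exact hp (.inr ⟨x, y, z, hi, hcol, hd⟩)

/-- Ancestral sets: those containing every parent of each of their vertices. On the subgraph
induced on such a set, moralization turns d-separation into separation. -/
def IsAncestral (D : V → V → Prop) (S : Set V) : Prop :=
  ∀ ⦃u v⦄, D u v → v ∈ S → u ∈ S

theorem isAncestral_anc (D : V → V → Prop) (S : Set V) : IsAncestral D (anc D S) := by
  rintro u v huv ⟨w, hw, hvw⟩
  exact ⟨w, hw, .head huv hvw⟩

theorem subset_anc (D : V → V → Prop) (S : Set V) : S ⊆ anc D S :=
  fun v hv => ⟨v, hv, .refl⟩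

theorem IsAncestral.mem_of_reflTransGen (hS : IsAncestral D S) (h : ReflTransGen D u v)
    (hv : v ∈ S) : u ∈ S := by
  induction h using ReflTransGen.head_induction_on with
  | refl => exact hv
  | head hab _ ih => exact hS hab ih

theorem IsAncestral.mem_of_edge_of_not_blocked (hS : IsAncestral D S) (hZS : Z ⊆ S) (hv : v ∈ S)
    {a b : V} {t : List V} (hpath : IsPath (fun a b => D a b ∨ D b a) u v (a :: b :: t))
    (hopen : ¬ Blocked D Z (a :: b :: t)) (hab : D a b) : b ∈ S := by
  induction t generalizing u a b with
  | nil =>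
    obtain ⟨-, -, -, hb⟩ := isPath_cons_cons.1 hpath
    exact (isPath_singleton.1 hb).2 ▸ hv
  | cons c t ih =>
    obtain ⟨-, -, -, hbpath⟩ := isPath_cons_cons.1 hpath
    obtain ⟨-, hbc | hcb, -, -⟩ := isPath_cons_cons.1 hbpath
    · exact hS hbc (ih hbpath (fun h => hopen (h.cons a)) hbc)
    · obtain ⟨d, ⟨_, rfl, hbd⟩, hdZ⟩ :=
        (interiorAt_cons_cons_cons t).exists_mem_desc_of_not_blocked hopen ⟨hab, hcb⟩
      exact hS.mem_of_reflTransGen hbd (hZS hdZ)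

theorem IsAncestral.mem_of_mem_of_not_blocked (hS : IsAncestral D S) (hZS : Z ⊆ S) (hu : u ∈ S)
    (hv : v ∈ S) (hpath : IsPath (fun a b => D a b ∨ D b a) u v p) (hopen : ¬ Blocked D Z p)
    (hx : x ∈ p) : x ∈ S := by
  induction p generalizing u with
  | nil => simp at hx
  | cons a t ih =>
    obtain rfl : a = u := hpath.head_eq
    rcases List.mem_cons.1 hx with rfl | hxt
    · exact hu
    · cases t with
      | nil => simp at hxt
      | cons b t =>
        obtain ⟨-, hab, -, hbpath⟩ := isPath_cons_cons.1 hpath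
        have hb : b ∈ S := hab.elim (hS.mem_of_edge_of_not_blocked hZS hv hpath hopen) (hS · hu)
        exact ih hb hbpath (fun h => hopen (h.cons a)) hxt

end OpenPaths

section Moralization

variable {V : Type*} {D : V → V → Prop} {H : SimpleGraph V} {S Z : Set V} {u v : V}
  {p : List V}

/-- `v` can be reached from `u` in `H` by a walk whose vertices after `u` are not in `Z`; nothing
is asked of `u` itself, so that such walks compose. -/
def ReachableAvoiding (H : SimpleGraph V) (Z : Set V) : V → V → Prop :=
  ReflTransGen (fun a b => H.Adj a b ∧ b ∉ Z)

theorem ReachableAvoiding.exists_isPath (h : ReachableAvoiding H Z u v) (hu : u ∉ Z) :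
    ∃ p, IsPath H.Adj u v p ∧ ∀ x ∈ p, x ∉ Z := by
  obtain ⟨p, hp⟩ := exists_isPath_of_reflTransGen h
  refine ⟨p, hp.mono fun _ _ hab => hab.1, fun x hx => ?_⟩
  rcases hp.eq_or_exists_rel_of_mem hx with rfl | ⟨w, -, hxZ⟩
  · exact hu
  · exact hxZ

theorem IsCut.not_reachableAvoiding {Vs : Set V} (hZ : IsCut Vs H u v Z) :
    ¬ ReachableAvoiding H Z u v := by
  intro h
  obtain ⟨-, hends, hmeets⟩ := hZ
  have hu : u ∉ Z := fun hu => (hends.subset ⟨hu, by simp⟩ : u ∈ (∅ : Set V))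
  obtain ⟨p, hp, hpZ⟩ := h.exists_isPath hu
  obtain ⟨z, hz, hzp⟩ := hmeets p hp
  exact hpZ z hzp hz

theorem moral_adj : (moral D S).Adj u v ↔
    u ≠ v ∧ u ∈ S ∧ v ∈ S ∧ (D u v ∨ D v u ∨ ∃ w ∈ S, D u w ∧ D v w) := by
  simp only [moral, SimpleGraph.fromRel_adj, and_comm (a := D v _)]
  tauto

theorem notMem_of_edge_of_not_blocked (hD : ∀ a b, D a b → ¬ D b a) (hv : v ∉ Z) {a b : V}
    {t : List V} (hpath : IsPath (fun a b => D a b ∨ D b a) u v (a :: b :: t))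
    (hopen : ¬ Blocked D Z (a :: b :: t)) (hba : D b a) : b ∉ Z := by
  obtain ⟨-, -, -, hb⟩ := isPath_cons_cons.1 hpath
  cases t with
  | nil => exact (isPath_singleton.1 hb).2 ▸ hv
  | cons c t =>
    exact (interiorAt_cons_cons_cons t).notMem_of_not_blocked hopen fun h => hD a b h.1 hba

theorem reachableAvoiding_moral_of_not_blocked (hD : ∀ a b, D a b → ¬ D b a) (hv : v ∉ Z)
    (hpath : IsPath (fun a b => D a b ∨ D b a) u v p) (hopen : ¬ Blocked D Z p)
    (hpS : ∀ x ∈ p, x ∈ S) : ReachableAvoiding (moral D S) Z u v := by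
  obtain ⟨t, rfl⟩ := hpath.exists_eq_cons
  induction t using List.twoStepInduction generalizing u with
  | nil =>
    obtain rfl : u = v := (isPath_singleton.1 hpath).2
    exact .refl
  | singleton b =>
    obtain ⟨-, hub, hne, hb⟩ := isPath_cons_cons.1 hpath
    obtain rfl : b = v := (isPath_singleton.1 hb).2
    have hadj : (moral D S).Adj u b :=
      moral_adj.2 ⟨by simpa using hne, hpS _ (by simp), hpS _ (by simp), by tauto⟩
    exact .single ⟨hadj, hv⟩
  | cons_cons b c t ih_skip ih =>
    obtain ⟨-, hub, hu, hbpath⟩ := isPath_cons_cons.1 hpath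
    obtain ⟨-, -, -, hcpath⟩ := isPath_cons_cons.1 hbpath
    simp only [List.mem_cons, not_or] at hu
    have hopen_b : ¬ Blocked D Z (b :: c :: t) := fun h => hopen (h.cons u)
    have hopen_c : ¬ Blocked D Z (c :: t) := fun h => hopen_b (h.cons b)
    by_cases hcol : D u b ∧ D c b
    · have huc : (moral D S).Adj u c := moral_adj.2
        ⟨hu.2.1, hpS _ (by simp), hpS _ (by simp), .inr (.inr ⟨b, hpS _ (by simp), hcol⟩)⟩
      have hc : c ∉ Z := notMem_of_edge_of_not_blocked hD hv hbpath hopen_b hcol.2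
      exact .head ⟨huc, hc⟩
        (ih_skip hcpath hopen_c fun x hx => hpS x (by simp only [List.mem_cons] at hx ⊢; tauto))
    · have hadj : (moral D S).Adj u b :=
        moral_adj.2 ⟨hu.1, hpS _ (by simp), hpS _ (by simp), by tauto⟩
      have hb : b ∉ Z := (interiorAt_cons_cons_cons t).notMem_of_not_blocked hopen hcol
      exact .head ⟨hadj, hb⟩
        (ih c hbpath hopen_b fun x hx => hpS x (List.mem_cons_of_mem _ hx))

theorem dSep_of_not_reachableAvoiding_moral (hD : ∀ a b, D a b → ¬ D b a) (hS : IsAncestral D S)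
    (hu : u ∈ S) (hv : v ∈ S) (hZS : Z ⊆ S) (hvZ : v ∉ Z)
    (hsep : ¬ ReachableAvoiding (moral D S) Z u v) : DSep D {u} {v} Z := by
  rintro _ rfl _ rfl p hpath
  by_contra hopen
  exact hsep (reachableAvoiding_moral_of_not_blocked hD hvZ hpath hopen
    fun _ hx => hS.mem_of_mem_of_not_blocked hZS hu hv hpath hopen hx)

end Moralization

section Contraction

variable {V : Type*} {H H' : SimpleGraph V} {I K Z : Set V} {u v w : V}

/-- `u` and `v` are joined by a path of `H` whose intermediate vertices all lie in `I`: the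
adjacency created when the vertices of `I` are eliminated from `H`. -/
def JoinedThrough (H : SimpleGraph V) (I : Set V) (u v : V) : Prop :=
  ∃ p, IsPath H.Adj u v p ∧ ∀ x ∈ p, x ≠ u → x ≠ v → x ∈ I

theorem joinedThrough_of_reflTransGen_of_adj (h : ReflTransGen (fun a b => H.Adj a b ∧ b ∈ I) u v)
    (hvw : H.Adj v w) : JoinedThrough H I u w := by
  have hreach : ReflTransGen (fun a b => H.Adj a b ∧ (b ∈ I ∨ b = w)) u w :=
    (ReflTransGen.mono (fun _ _ hab => ⟨hab.1, .inl hab.2⟩) _ _ h).tail ⟨hvw, .inr rfl⟩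
  obtain ⟨p, hp⟩ := exists_isPath_of_reflTransGen hreach
  refine ⟨p, hp.mono fun _ _ hab => hab.1, fun x hx hxu hxw => ?_⟩
  obtain ⟨-, -, hxI⟩ := (hp.eq_or_exists_rel_of_mem hx).resolve_left hxu
  exact hxI.resolve_right hxw

theorem ReachableAvoiding.of_joinedThrough (hK : ∀ a b, H.Adj a b → b ∈ K)
    (hH' : ∀ a ∈ K \ I, ∀ b ∈ K \ I, a ≠ b → JoinedThrough H I a b → H'.Adj a b)
    (hu : u ∈ K \ I) (hv : v ∉ I) (h : ReachableAvoiding H Z u v) :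
    ReachableAvoiding H' Z u v := by
  -- Generalize to a walk that starts at `x` while `a`, the last vertex kept, lies behind it.
  suffices hlast : ∀ x, ReachableAvoiding H Z x v → ∀ a ∈ K \ I,
      ReflTransGen (fun a b => H.Adj a b ∧ b ∈ I) a x → ReachableAvoiding H' Z a v from
    hlast u h u hu .refl
  intro x hxv
  induction hxv using ReflTransGen.head_induction_on with
  | refl =>
    intro a _ hav
    cases hav with
    | refl => exact .refl
    | tail _ hbv => exact absurd hbv.2 hv
  | @head x y hxy _ ih =>
    intro a ha hax
    by_cases hy : y ∈ I
    · exact ih a ha (hax.tail ⟨hxy.1, hy⟩)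
    · have hyKI : y ∈ K \ I := ⟨hK x y hxy.1, hy⟩
      have hyv : ReachableAvoiding H' Z y v := ih y hyKI .refl
      obtain rfl | hay := eq_or_ne a y
      · exact hyv
      · exact .head ⟨hH' a ha y hyKI hay (joinedThrough_of_reflTransGen_of_adj hax hxy.1), hxy.2⟩
          hyv

end Contraction

section Adjustment

variable {V : Type*} {D : V → V → Prop} {A Y x l : V} {L N Z : Set V}

theorem mem_H1verts : x ∈ H1verts D A Y L N ↔
    x ∈ ancAYL D A Y L ∧ (x = A ∨ x = Y ∨ x ∈ N ∧ x ∉ forb D A Y) := by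
  simp only [H1verts, Ignore, mem_sdiff, mem_inter_iff, mem_union, mem_univ, true_and,
    mem_insert_iff, mem_singleton_iff]
  tauto

theorem left_mem_ancAYL : A ∈ ancAYL D A Y L :=
  subset_anc D _ (by simp)

theorem right_mem_ancAYL : Y ∈ ancAYL D A Y L :=
  subset_anc D _ (by simp)

theorem left_mem_H1verts : A ∈ H1verts D A Y L N :=
  mem_H1verts.2 ⟨left_mem_ancAYL, .inl rfl⟩

theorem right_mem_H1verts : Y ∈ H1verts D A Y L N :=
  mem_H1verts.2 ⟨right_mem_ancAYL, .inr (.inl rfl)⟩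

theorem isAncestral_pbd_ancAYL : IsAncestral (pbd D A Y) (ancAYL D A Y L) :=
  fun _ _ huv hv => isAncestral_anc D _ huv.1 hv

theorem H1_adj_of_joinedThrough {u v : V} (hu : u ∈ H1verts D A Y L N)
    (hv : v ∈ H1verts D A Y L N) (huv : u ≠ v)
    (h : JoinedThrough (H0 D A Y L) (Ignore D A Y L N) u v) : (H1 D A Y L N).Adj u v :=
  (SimpleGraph.fromRel_adj _ _ _).2 ⟨huv, .inl ⟨hu, hv, .inl h⟩⟩

theorem H1_adj_left (hl : l ∈ L) (hlV : l ∈ H1verts D A Y L N) (hlA : A ≠ l) :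
    (H1 D A Y L N).Adj A l :=
  (SimpleGraph.fromRel_adj _ _ _).2
    ⟨hlA, .inl ⟨left_mem_H1verts, hlV, .inr (.inl ⟨rfl, hl⟩)⟩⟩

theorem H1_adj_right (hl : l ∈ L) (hlV : l ∈ H1verts D A Y L N) (hlY : Y ≠ l) :
    (H1 D A Y L N).Adj Y l :=
  (SimpleGraph.fromRel_adj _ _ _).2
    ⟨hlY, .inl ⟨right_mem_H1verts, hlV, .inr (.inr ⟨rfl, hl⟩)⟩⟩

theorem ReachableAvoiding.H1_of_H0 (h : ReachableAvoiding (H0 D A Y L) Z A Y) :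
    ReachableAvoiding (H1 D A Y L N) Z A Y :=
  h.of_joinedThrough (fun _ _ hab => (moral_adj.1 hab).2.2.1)
    (fun _ ha _ hb hab hj => H1_adj_of_joinedThrough ha hb hab hj)
    left_mem_H1verts right_mem_H1verts.2

theorem reachableAvoiding_H1_of_mem (hLN : L ⊆ N) (hLforb : L ∩ forb D A Y = ∅) (hl : l ∈ L)
    (hlZ : l ∉ Z) (hYZ : Y ∉ Z) : ReachableAvoiding (H1 D A Y L N) Z A Y := by
  have hlforb : l ∉ forb D A Y := fun h => hLforb.subset ⟨hl, h⟩
  have hlV : l ∈ H1verts D A Y L N :=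
    mem_H1verts.2 ⟨subset_anc D _ (.inr hl), .inr (.inr ⟨hLN hl, hlforb⟩)⟩
  have hAl : (H1 D A Y L N).Adj A l := H1_adj_left hl hlV fun h => hlforb (.inr h.symm)
  have hAl_reach : ReachableAvoiding (H1 D A Y L N) Z A l := .single ⟨hAl, hlZ⟩
  obtain rfl | hlY := eq_or_ne Y l
  · exact hAl_reach
  · exact hAl_reach.tail ⟨(H1_adj_right hl hlV hlY).symm, hYZ⟩

theorem forb_subset_desc : forb D A Y ⊆ desc D {A} := by
  rintro x (⟨v, ⟨-, hAv, -⟩, hvx⟩ | rfl)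
  · exact ⟨A, rfl, hAv.trans hvx⟩
  · exact ⟨x, rfl, .refl⟩

theorem IsCut.mem_and_notMem_forb {H : SimpleGraph V} (hZ : IsCut (H1verts D A Y L N) H A Y Z)
    (hx : x ∈ Z) : x ∈ N ∧ x ∉ forb D A Y := by
  obtain ⟨hZV, hends, -⟩ := hZ
  have hxAY : x ∉ ({A, Y} : Set V) := fun h => hends.subset ⟨hx, h⟩
  rcases (mem_H1verts.1 (hZV hx)).2 with rfl | rfl | h
  · exact absurd (.inl rfl) hxAY
  · exact absurd (.inr rfl) hxAY
  · exact h

theorem stmt2_general (hD : ∀ a b, D a b → ¬ D b a) (hLforb : L ∩ forb D A Y = ∅)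
    (hLN : L ⊆ N) (hZ : IsCut (H1verts D A Y L N) (H1 D A Y L N) A Y Z) :
    GAC D A Y L N Z := by
  have hYZ : Y ∉ Z := fun h => hZ.2.1.subset ⟨h, .inr rfl⟩
  refine ⟨?dSep, ?forb, ?subset, fun x hx => (hZ.mem_and_notMem_forb hx).1⟩
  case dSep =>
    exact dSep_of_not_reachableAvoiding_moral (fun a b hab hba => hD a b hab.1 hba.1)
      isAncestral_pbd_ancAYL left_mem_ancAYL right_mem_ancAYL
      (fun x hx => (hZ.1 hx).1) hYZ fun h => hZ.not_reachableAvoiding h.H1_of_H0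
  case forb =>
    exact eq_empty_of_forall_notMem fun x hx => (hZ.mem_and_notMem_forb hx.1).2 hx.2
  case subset =>
    intro l hl
    by_contra hlZ
    exact hZ.not_reachableAvoiding (reachableAvoiding_H1_of_mem hLN hLforb hl hlZ hYZ)

end Adjustment

/-- Part 1 of Lemma 5 (statement 2): every `A`–`Y` cut in `H¹` satisfies the
graphical adjustment criterion. -/
theorem stmt2 {V : Type*} [Fintype V] [DecidableEq V]
    (D : V → V → Prop) (hacy : Acyclic D)
    (A Y : V) (L N : Set V)
    (hAY : A ≠ Y) (hAancY : Relation.ReflTransGen D A Y)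
    (hLnd : L ∩ desc D {A} = ∅) (hLY : Y ∉ L)
    (hN : {A, Y} ∪ L ⊆ N)
    (Z : Set V) (hZ : IsCut (H1verts D A Y L N) (H1 D A Y L N) A Y Z) :
    GAC D A Y L N Z := by
  exact stmt2_general (fun u v huv hvu => hacy u v huv (.single hvu))
    (subset_eq_empty (inter_subset_inter_right L forb_subset_desc) hLnd)
    (subset_union_right.trans hN) hZ

end CausalGraph
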